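/- In R = k[z_0,…,z_5] with I_X = (z_3z_4 − z_0z_5, z_1z_4 − z_3z_5, z_2z_3 − z_4z_5, z_0z_2 − z_4^2, z_0z_1 − z_3^2), the ring R/I_X is Gorenstein; equivalently, I_X admits a graded free resolution 0 → R(−5) → 5R(−3) → 5R(−2) → I_X → 0. -/

import Mathlib

open MvPolynomial

/-!
The five quadrics are the `4 × 4` sub-Pfaffians `pᵢ` of an alternating `5 × 5` matrix `M` of linear
forms, so that `p`, `M` and `pᵀ` form a complex `R → R⁵ → R⁵ → R` (Buchsbaum–Eisenbud). For each `i`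
an explicit matrix `Hᵢ` with `M Hᵢ = pᵢ - eᵢ pᵀ`, together with its transpose `Hᵢ M = pᵢ - p eᵢᵀ`,
shows that the Pfaffian ideal annihilates the homology of this complex. A complex of flat modules
of length three whose homology is killed by a regular sequence of length three is exact to the left
of its last term. Here such a sequence is `z₀²(z₅² - z₁z₂)`, `z₄² - z₀z₂`, `z₃² - z₀z₁`: apart from
the factor `z₀²`, each member is monic in a variable absent from the preceding ones.
-/

section RegularSequence

open RingTheory.Sequence

variable {R P : Type*} [CommRing R] [AddCommGroup P] [Module R P]

theorem isWeaklyRegular_of_flat [Module.Flat R P] {rs : List R} (h : IsWeaklyRegular R rs) :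
    IsWeaklyRegular P rs :=
  ((TensorProduct.lid R P).isWeaklyRegular_congr rs).mp h.isWeaklyRegular_rTensor

theorem isWeaklyRegular_append_singleton_iff {rs : List R} {r : R} :
    IsWeaklyRegular P (rs ++ [r]) ↔ IsWeaklyRegular P rs ∧
      ∀ p : P, r • p ∈ Ideal.ofList rs • (⊤ : Submodule R P) →
        p ∈ Ideal.ofList rs • (⊤ : Submodule R P) := by
  rw [isWeaklyRegular_append_iff, isWeaklyRegular_singleton_iff,
    isSMulRegular_quotient_iff_mem_of_smul_mem]

theorem mem_ofList_pair_smul_top_iff {r s : R} {p : P} :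
    p ∈ Ideal.ofList [r, s] • (⊤ : Submodule R P) ↔ ∃ c d : P, p = r • c + s • d := by
  simp [Submodule.sup_smul, Submodule.mem_sup, Submodule.mem_smul_pointwise_iff_exists,
    Submodule.ideal_span_singleton_smul, eq_comm]

theorem exists_eq_smul_of_smul_eq_smul {r s : R} (h : IsWeaklyRegular P [r, s]) {p q : P}
    (hpq : s • p = r • q) : ∃ u, p = r • u := by
  have hp := (isWeaklyRegular_append_singleton_iff (rs := [r]).mp h).2 p
  simp only [Ideal.ofList_singleton, Submodule.ideal_span_singleton_smul,
    Submodule.mem_smul_pointwise_iff_exists, Submodule.mem_top, true_and] at hp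
  obtain ⟨u, hu⟩ := hp ⟨q, hpq.symm⟩
  exact ⟨u, hu.symm⟩

theorem exists_eq_smul_add_smul_of_smul_eq {r s t : R} (h : IsWeaklyRegular P [r, s, t])
    {p a b : P} (hp : t • p = r • a + s • b) : ∃ c d, p = r • c + s • d :=
  mem_ofList_pair_smul_top_iff.mp <|
    (isWeaklyRegular_append_singleton_iff (rs := [r, s]).mp h).2 p <|
      mem_ofList_pair_smul_top_iff.mpr ⟨a, b, hp⟩

variable {A B : Type*} [CommRing A] [CommRing B]

theorem isWeaklyRegular_map_ringEquiv_iff (e : A ≃+* B) (rs : List A) :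
    IsWeaklyRegular B (rs.map e) ↔ IsWeaklyRegular A rs :=
  (e.toAddEquiv.isWeaklyRegular_congr <| List.forall₂_map_right_iff.mpr <|
    List.forall₂_same.mpr fun r _ x => map_mul e r x).symm

theorem mem_map_C_of_monic_mul_mem {I : Ideal A} {f u : Polynomial A} (hf : f.Monic)
    (h : f * u ∈ I.map Polynomial.C) : u ∈ I.map Polynomial.C := by
  rw [← I.mk_ker, ← Polynomial.ker_mapRingHom, RingHom.mem_ker] at h ⊢
  rw [map_mul] at h
  exact ((hf.map _).mul_right_eq_zero_iff).mp h

theorem isWeaklyRegular_map_C_append_monic {rs : List A} (hrs : IsWeaklyRegular A rs)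
    {f : Polynomial A} (hf : f.Monic) :
    IsWeaklyRegular (Polynomial A) (rs.map Polynomial.C ++ [f]) := by
  refine isWeaklyRegular_append_singleton_iff.mpr ⟨hrs.of_flat, fun u => ?_⟩
  rw [smul_eq_mul, Ideal.mul_top, ← Ideal.map_ofList]
  exact mem_map_C_of_monic_mul_mem hf

theorem finSuccEquiv_rename_succ {n : ℕ} (p : MvPolynomial (Fin n) A) :
    finSuccEquiv A n (rename Fin.succ p) = Polynomial.C p := by
  induction p using MvPolynomial.induction_on with
  | C a => simp [finSuccEquiv_apply]
  | add p q hp hq => simp [hp, hq]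
  | mul_X p i hp => simp [hp, finSuccEquiv_X_succ]

theorem isWeaklyRegular_rename_succ_append {n : ℕ} {rs : List (MvPolynomial (Fin n) A)}
    (hrs : IsWeaklyRegular (MvPolynomial (Fin n) A) rs)
    (a : MvPolynomial (Fin n) A) {d : ℕ} (hd : d ≠ 0) :
    IsWeaklyRegular (MvPolynomial (Fin (n + 1)) A)
      (rs.map (rename Fin.succ) ++ [X 0 ^ d - rename Fin.succ a]) := by
  rw [← isWeaklyRegular_map_ringEquiv_iff (finSuccEquiv A n).toRingEquiv]
  convert isWeaklyRegular_map_C_append_monic hrs (Polynomial.monic_X_pow_sub_C a hd) using 1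
  simp [finSuccEquiv_rename_succ, finSuccEquiv_X_zero, Function.comp_def]

end RegularSequence

section Acyclicity

open Function RingTheory.Sequence

variable {R P Q N L : Type*} [CommRing R] [AddCommGroup P] [Module R P]
  [AddCommGroup Q] [Module R Q] [AddCommGroup N] [Module R N] [AddCommGroup L] [Module R L]

theorem smul_mem_of_mem_ideal_span {S : Set R} {U : Submodule R N} {n : N}
    (h : ∀ s ∈ S, s • n ∈ U) {x : R} (hx : x ∈ Ideal.span S) : x • n ∈ U :=
  Submodule.mem_colon_singleton.mp <|
    Ideal.span_le.mpr (fun s hs => Submodule.mem_colon_singleton.mpr (h s hs)) hx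

theorem mem_range_of_smul_mem_range {φ : P →ₗ[R] Q} {ψ : Q →ₗ[R] N} (hφ : Injective φ)
    (hφψ : Exact φ ψ) {r s t : R} (hP : IsWeaklyRegular P [r, s, t])
    (hQ : IsWeaklyRegular Q [r, s]) (hN : IsWeaklyRegular N [r]) {n : N}
    (hn : ∀ x ∈ [r, s, t], x • n ∈ LinearMap.range ψ) : n ∈ LinearMap.range ψ := by
  obtain ⟨qr, hr⟩ := hn r (by simp)
  obtain ⟨qs, hs⟩ := hn s (by simp)
  obtain ⟨qt, ht⟩ := hn t (by simp)
  have hlift {x y : R} {q q' : Q} (hq : ψ q = x • n) (hq' : ψ q' = y • n) :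
      ∃ p, φ p = y • q - x • q' :=
    (hφψ _).mp (by rw [map_sub, map_smul, map_smul, hq, hq', smul_comm, sub_self])
  obtain ⟨prs, hrs⟩ := hlift hr hs
  obtain ⟨prt, hrt⟩ := hlift hr ht
  obtain ⟨pst, hst⟩ := hlift hs ht
  have hsyz : t • prs = r • (-pst) + s • prt := hφ <| by
    simp only [map_add, map_smul, map_neg, hrs, hrt, hst]
    module
  obtain ⟨c, d, hcd⟩ := exists_eq_smul_add_smul_of_smul_eq hP hsyz
  have hqr : s • (qr - φ d) = r • (qs + φ c) := by
    have h : r • φ c + s • φ d = s • qr - r • qs := by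
      rw [← hrs, hcd, map_add, map_smul, map_smul]
    calc s • (qr - φ d) = s • qr - r • qs + (r • qs - s • φ d) := by module
      _ = r • (qs + φ c) := by rw [← h]; module
  obtain ⟨u, hu⟩ := exists_eq_smul_of_smul_eq_smul hQ hqr
  refine ⟨u, (isWeaklyRegular_singleton_iff N r).mp hN ?_⟩
  simp only [← map_smul, ← hu, map_sub, hr, hφψ.apply_apply_eq_zero, sub_zero]

theorem exact_of_smul_mem_range [Module.Flat R P] [Module.Flat R Q] [Module.Flat R N]
    {φ : P →ₗ[R] Q} {ψ : Q →ₗ[R] N} {χ : N →ₗ[R] L} (hφψ : ψ ∘ₗ φ = 0) (hψχ : χ ∘ₗ ψ = 0)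
    {r s t : R} (hreg : IsWeaklyRegular R [r, s, t])
    (hP : ∀ x ∈ [r, s, t], ∀ p, φ p = 0 → x • p = 0)
    (hQ : ∀ x ∈ [r, s, t], ∀ q, ψ q = 0 → x • q ∈ LinearMap.range φ)
    (hN : ∀ x ∈ [r, s, t], ∀ n, χ n = 0 → x • n ∈ LinearMap.range ψ) :
    Injective φ ∧ Exact φ ψ ∧ Exact ψ χ := by
  have hreg₂ : IsWeaklyRegular R [r, s] :=
    (isWeaklyRegular_append_singleton_iff (rs := [r, s]).mp hreg).1
  have hreg₁ : IsWeaklyRegular R [r] :=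
    (isWeaklyRegular_append_singleton_iff (rs := [r]).mp hreg₂).1
  have hφ : Injective φ := (injective_iff_map_eq_zero φ).mpr fun p hp =>
    ((isWeaklyRegular_singleton_iff P r).mp (isWeaklyRegular_of_flat hreg₁)).right_eq_zero_of_smul
      (hP r (by simp) p hp)
  have hexact : Exact φ ψ := LinearMap.exact_of_comp_eq_zero_of_ker_le_range hφψ fun q hq =>
    mem_range_of_smul_mem_range (φ := (0 : PUnit →ₗ[R] P)) (injective_of_subsingleton _)
      ((LinearMap.exact_zero_iff_injective _ φ).mpr hφ) (isWeaklyRegular_of_flat hreg)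
      (isWeaklyRegular_of_flat hreg₂) (isWeaklyRegular_of_flat hreg₁) (hQ · · q hq)
  exact ⟨hφ, hexact, LinearMap.exact_of_comp_eq_zero_of_ker_le_range hψχ fun n hn =>
    mem_range_of_smul_mem_range hφ hexact (isWeaklyRegular_of_flat hreg)
      (isWeaklyRegular_of_flat hreg₂) (isWeaklyRegular_of_flat hreg₁) (hN · · n hn)⟩

end Acyclicity

section Pfaffian

open Matrix

variable {R n : Type*} [CommRing R]

/-- A matrix is alternating if it is skew-symmetric with zero diagonal; the latter condition is
separate because `2` may be a zero divisor. -/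
structure IsAlternating (M : Matrix n n R) : Prop where
  transpose_eq_neg : Mᵀ = -M
  apply_self (i : n) : M i i = 0

namespace IsAlternating

theorem apply_swap {M : Matrix n n R} (hM : IsAlternating M) (i j : n) : M i j = -M j i :=
  congrFun₂ hM.transpose_eq_neg j i

theorem submatrix {m : Type*} {M : Matrix n n R} (hM : IsAlternating M) (f : m → n) :
    IsAlternating (M.submatrix f f) where
  transpose_eq_neg := by ext i j; exact hM.apply_swap (f j) (f i)
  apply_self i := hM.apply_self (f i)

theorem vecMul_eq [Fintype n] {M : Matrix n n R} (hM : IsAlternating M) (v : n → R) :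
    v ᵥ* M = -(M *ᵥ v) := by
  rw [← mulVec_transpose, hM.transpose_eq_neg, neg_mulVec]

theorem exists_eq_of_fin_five {M : Matrix (Fin 5) (Fin 5) R} (hM : IsAlternating M) :
    ∃ a b c d e f g h p q : R, M =
      !![ 0,  a,  b,  c, d;
         -a,  0,  e,  f, g;
         -b, -e,  0,  h, p;
         -c, -f, -h,  0, q;
         -d, -g, -p, -q, 0] := by
  refine ⟨M 0 1, M 0 2, M 0 3, M 0 4, M 1 2, M 1 3, M 1 4, M 2 3, M 2 4, M 3 4, ?_⟩
  ext i j
  fin_cases i <;> fin_cases j <;> first | exact hM.apply_self _ | exact hM.apply_swap _ _ | rfl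

end IsAlternating

/-- The signed `4 × 4` sub-Pfaffians of an alternating `5 × 5` matrix: entry `i` is the Pfaffian
with row and column `i` removed. The indices are taken modulo `5`, and since a cyclic shift of five
letters is even, this ordering of the remaining rows already accounts for the sign `(-1) ^ i`. -/
def subpfaffians (M : Matrix (Fin 5) (Fin 5) R) (i : Fin 5) : R :=
  M (i + 1) (i + 2) * M (i + 3) (i + 4) - M (i + 1) (i + 3) * M (i + 2) (i + 4) +
    M (i + 1) (i + 4) * M (i + 2) (i + 3)

/-- The case `i = 0` of `subpfaffianHomotopy`: for `{j, k, l, m} = {1, 2, 3, 4}` with `l < m`, the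
entry at `(j, k)` is `-M l m` times the sign of the permutation `(0, j, k, l, m)`. -/
def subpfaffianHomotopyZero (M : Matrix (Fin 5) (Fin 5) R) : Matrix (Fin 5) (Fin 5) R :=
  !![0, 0, 0, 0, 0;
     0, 0, -M 3 4, M 2 4, -M 2 3;
     0, M 3 4, 0, -M 1 4, M 1 3;
     0, -M 2 4, M 1 4, 0, -M 1 2;
     0, M 2 3, -M 1 3, M 1 2, 0]

/-- The homotopy from `0` to multiplication by the `i`-th sub-Pfaffian `pᵢ` in the middle of the
Pfaffian complex `R → R⁵ → R⁵ → R`, whose maps are `p`, `M` and `pᵀ`; it is obtained from the case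
`i = 0` by cyclically shifting the indices. -/
def subpfaffianHomotopy (M : Matrix (Fin 5) (Fin 5) R) (i : Fin 5) : Matrix (Fin 5) (Fin 5) R :=
  (subpfaffianHomotopyZero (M.submatrix (i + ·) (i + ·))).submatrix (-i + ·) (-i + ·)

theorem subpfaffians_submatrix_add (M : Matrix (Fin 5) (Fin 5) R) (i j : Fin 5) :
    subpfaffians (M.submatrix (i + ·) (i + ·)) j = subpfaffians M (i + j) := by
  simp [subpfaffians, add_assoc]

theorem isHomogeneous_subpfaffians {σ : Type*} {N : Matrix (Fin 5) (Fin 5) (MvPolynomial σ R)}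
    {d : ℕ} (hN : ∀ i j, (N i j).IsHomogeneous d) (i : Fin 5) :
    (subpfaffians N i).IsHomogeneous (d + d) :=
  (((hN _ _).mul (hN _ _)).sub ((hN _ _).mul (hN _ _))).add ((hN _ _).mul (hN _ _))

theorem isAlternating_subpfaffianHomotopy (M : Matrix (Fin 5) (Fin 5) R) (i : Fin 5) :
    IsAlternating (subpfaffianHomotopy M i) := by
  refine IsAlternating.submatrix ⟨?_, fun j => ?_⟩ _
  · ext j k
    fin_cases j <;> fin_cases k <;> simp [subpfaffianHomotopyZero]
  · fin_cases j <;> rfl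

namespace IsAlternating

variable {M : Matrix (Fin 5) (Fin 5) R}

theorem mulVec_subpfaffians (hM : IsAlternating M) : M *ᵥ subpfaffians M = 0 := by
  obtain ⟨a, b, c, d, e, f, g, h, p, q, rfl⟩ := hM.exists_eq_of_fin_five
  ext i
  fin_cases i <;> simp [mulVec, dotProduct, Fin.sum_univ_five, subpfaffians] <;> ring

theorem subpfaffians_dotProduct_mulVec (hM : IsAlternating M) (v : Fin 5 → R) :
    subpfaffians M ⬝ᵥ M *ᵥ v = 0 := by
  rw [dotProduct_mulVec, hM.vecMul_eq, hM.mulVec_subpfaffians, neg_zero, zero_dotProduct]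

theorem mul_subpfaffianHomotopyZero (hM : IsAlternating M) :
    M * subpfaffianHomotopyZero M =
      subpfaffians M 0 • 1 - vecMulVec (Pi.single 0 1) (subpfaffians M) := by
  obtain ⟨a, b, c, d, e, f, g, h, p, q, rfl⟩ := hM.exists_eq_of_fin_five
  ext j k
  fin_cases j <;> fin_cases k <;>
    simp [subpfaffianHomotopyZero, mul_apply, Fin.sum_univ_five, subpfaffians, vecMulVec_apply] <;>
    ring

theorem mul_subpfaffianHomotopy (hM : IsAlternating M) (i : Fin 5) :
    M * subpfaffianHomotopy M i =
      subpfaffians M i • 1 - vecMulVec (Pi.single i 1) (subpfaffians M) := by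
  have h := (hM.submatrix (i + ·)).mul_subpfaffianHomotopyZero
  ext j k
  calc (M * subpfaffianHomotopy M i) j k
      = (M.submatrix (i + ·) (i + ·) *
          subpfaffianHomotopyZero (M.submatrix (i + ·) (i + ·))) (-i + j) (-i + k) := by
        rw [mul_apply, mul_apply, ← Equiv.sum_comp (Equiv.addLeft i)]
        simp [subpfaffianHomotopy]
    _ = (subpfaffians M i • 1 - vecMulVec (Pi.single i 1) (subpfaffians M) :
          Matrix (Fin 5) (Fin 5) R) j k := by
        rw [h]
        simp [subpfaffians_submatrix_add, vecMulVec_apply, one_apply, Pi.single_apply,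
          neg_add_eq_zero, eq_comm]

theorem mulVec_subpfaffianHomotopy_mulVec (hM : IsAlternating M) (i : Fin 5) (w : Fin 5 → R) :
    M *ᵥ subpfaffianHomotopy M i *ᵥ w =
      subpfaffians M i • w - (subpfaffians M ⬝ᵥ w) • Pi.single i 1 := by
  rw [mulVec_mulVec, hM.mul_subpfaffianHomotopy, sub_mulVec, smul_mulVec, one_mulVec,
    vecMulVec_mulVec, op_smul_eq_smul]

theorem subpfaffianHomotopy_mulVec_mulVec (hM : IsAlternating M) (i : Fin 5) (v : Fin 5 → R) :
    subpfaffianHomotopy M i *ᵥ M *ᵥ v = subpfaffians M i • v - v i • subpfaffians M := by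
  have h := congrArg (v ᵥ* ·) (hM.mul_subpfaffianHomotopy i)
  simpa [← vecMul_vecMul, hM.vecMul_eq, (isAlternating_subpfaffianHomotopy M i).vecMul_eq,
    mulVec_neg, vecMul_sub, vecMul_smul, vecMul_vecMulVec] using h

end IsAlternating

end Pfaffian

section PfaffianComplex

open Function Matrix RingTheory.Sequence

variable {R : Type*} [CommRing R] {M : Matrix (Fin 5) (Fin 5) R}

theorem IsAlternating.exact_subpfaffians (hM : IsAlternating M) {r s t : R}
    (hreg : IsWeaklyRegular R [r, s, t])
    (hmem : ∀ x ∈ [r, s, t], x ∈ Ideal.span (Set.range (subpfaffians M))) :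
    Injective (LinearMap.toSpanSingleton R _ (subpfaffians M)) ∧
      Exact (LinearMap.toSpanSingleton R _ (subpfaffians M)) M.mulVecLin ∧
      Exact M.mulVecLin (Fintype.linearCombination R (subpfaffians M)) := by
  have hlin (w : Fin 5 → R) :
      Fintype.linearCombination R (subpfaffians M) w = subpfaffians M ⬝ᵥ w := by
    rw [Fintype.linearCombination_apply, dotProduct_comm]
    rfl
  refine exact_of_smul_mem_range ?_ ?_ hreg (fun x hx c hc => ?_)
    (fun x hx v hv => smul_mem_of_mem_ideal_span ?_ (hmem x hx))
    (fun x hx w hw => smul_mem_of_mem_ideal_span ?_ (hmem x hx))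
  · ext1
    simp [hM.mulVec_subpfaffians]
  · refine LinearMap.ext fun v => ?_
    rw [LinearMap.comp_apply, hlin, mulVecLin_apply, hM.subpfaffians_dotProduct_mulVec]
    rfl
  · refine (Submodule.mem_bot R).mp (smul_mem_of_mem_ideal_span ?_ (hmem x hx))
    rintro _ ⟨i, rfl⟩
    simpa [mul_comm] using congrFun hc i
  · rintro _ ⟨i, rfl⟩
    have h := hM.subpfaffianHomotopy_mulVec_mulVec i v
    rw [← mulVecLin_apply M, hv, mulVec_zero] at h
    exact ⟨v i, (sub_eq_zero.mp h.symm).symm⟩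
  · rintro _ ⟨i, rfl⟩
    refine ⟨subpfaffianHomotopy M i *ᵥ w, ?_⟩
    rw [mulVecLin_apply, hM.mulVec_subpfaffianHomotopy_mulVec, ← hlin, hw, zero_smul, sub_zero]

end PfaffianComplex

section Linkage

open Matrix RingTheory.Sequence

variable (k : Type*) [CommRing k]

/-- The alternating matrix of linear forms whose `4 × 4` sub-Pfaffians generate the ideal linking
the Veronese surface to a plane in `ℙ⁵`. -/
noncomputable def linkageMatrix : Matrix (Fin 5) (Fin 5) (MvPolynomial (Fin 6) k) :=
  !![   0,  X 4, -X 3,  X 1, -X 2;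
     -X 4,    0,  X 0, -X 3,    0;
      X 3, -X 0,    0,    0,  X 4;
     -X 1,  X 3,    0,    0, -X 5;
      X 2,    0, -X 4,  X 5,    0]

theorem isAlternating_linkageMatrix : IsAlternating (linkageMatrix k) where
  transpose_eq_neg := by
    ext1 i j
    fin_cases i <;> fin_cases j <;> simp [linkageMatrix]
  apply_self i := by fin_cases i <;> rfl

theorem isHomogeneous_linkageMatrix (i j : Fin 5) : (linkageMatrix k i j).IsHomogeneous 1 := by
  have hX (i : Fin 6) : (X i : MvPolynomial (Fin 6) k).IsHomogeneous 1 := isHomogeneous_X k i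
  have h0 : (0 : MvPolynomial (Fin 6) k).IsHomogeneous 1 := isHomogeneous_zero _ _ _
  fin_cases i <;> fin_cases j <;> first | exact h0 | exact hX _ | exact (hX _).neg

theorem subpfaffians_linkageMatrix :
    subpfaffians (linkageMatrix k) =
      ![X 3 * X 4 - X 0 * X 5, X 1 * X 4 - X 3 * X 5, X 2 * X 3 - X 4 * X 5,
        X 0 * X 2 - X 4 ^ 2, X 0 * X 1 - X 3 ^ 2] := by
  ext1 i
  fin_cases i <;> simp [subpfaffians, linkageMatrix] <;> ring

theorem isWeaklyRegular_quadrics : IsWeaklyRegular (R := MvPolynomial (Fin 6) k)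
    (MvPolynomial (Fin 6) k)
    [X 0 ^ 2 * (X 5 ^ 2 - X 1 * X 2), X 4 ^ 2 - X 0 * X 2, X 3 ^ 2 - X 0 * X 1] := by
  -- Rotating the indices by `3` makes `X 3`, `X 4`, `X 5` the variables adjoined last, in the
  -- order `X 5`, `X 4`, `X 3`.
  have hX : IsRegular (X 1 ^ 2 : MvPolynomial (Fin 4) k) := isRegular_X_pow 2
  have hquadric : IsSMulRegular (MvPolynomial (Fin 4) k)
      (X 0 ^ 2 - rename Fin.succ (X 1 * X 2) : MvPolynomial (Fin 4) k) :=
    (isWeaklyRegular_singleton_iff _ _).mp <|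
      isWeaklyRegular_rename_succ_append (.nil _ (MvPolynomial (Fin 3) k)) _ two_ne_zero
  have h := isWeaklyRegular_rename_succ_append (isWeaklyRegular_rename_succ_append
    ((isWeaklyRegular_singleton_iff _ _).mpr (hX.left.isSMulRegular.mul hquadric))
    (X 1 * X 3) two_ne_zero) (X 2 * X 3) two_ne_zero
  simpa using (isWeaklyRegular_map_ringEquiv_iff
    (renameEquiv k (Equiv.addRight (3 : Fin 6))).toRingEquiv _).mpr h

theorem exists_isWeaklyRegular_mem_span_subpfaffians_linkageMatrix :
    ∃ r s t, IsWeaklyRegular (MvPolynomial (Fin 6) k) [r, s, t] ∧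
      ∀ x ∈ [r, s, t], x ∈ Ideal.span (Set.range (subpfaffians (linkageMatrix k))) := by
  refine ⟨_, _, _, isWeaklyRegular_quadrics k, ?_⟩
  have hmem (i : Fin 5) : subpfaffians (linkageMatrix k) i ∈
      Ideal.span (Set.range (subpfaffians (linkageMatrix k))) :=
    Ideal.subset_span (Set.mem_range_self i)
  generalize Ideal.span (Set.range (subpfaffians (linkageMatrix k))) = I at hmem ⊢
  rw [subpfaffians_linkageMatrix] at hmem
  have h₀ : (X 3 * X 4 - X 0 * X 5 : MvPolynomial (Fin 6) k) ∈ I := hmem 0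
  have h₃ : (X 4 ^ 2 - X 0 * X 2 : MvPolynomial (Fin 6) k) ∈ I := by
    rw [← neg_sub]
    exact neg_mem (hmem 3)
  have h₄ : (X 3 ^ 2 - X 0 * X 1 : MvPolynomial (Fin 6) k) ∈ I := by
    rw [← neg_sub]
    exact neg_mem (hmem 4)
  have h₅ : (X 0 ^ 2 * (X 5 ^ 2 - X 1 * X 2) : MvPolynomial (Fin 6) k) ∈ I := by
    -- `(X 3 * X 4) ^ 2` is congruent to `X 0 ^ 2 * X 1 * X 2` modulo the two monic quadrics.
    have hcomb : (X 0 ^ 2 * (X 5 ^ 2 - X 1 * X 2) : MvPolynomial (Fin 6) k) =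
        X 3 ^ 2 * (X 4 ^ 2 - X 0 * X 2) + X 0 * X 2 * (X 3 ^ 2 - X 0 * X 1) -
          (X 3 * X 4 + X 0 * X 5) * (X 3 * X 4 - X 0 * X 5) := by ring
    rw [hcomb]
    exact sub_mem (add_mem (I.mul_mem_left _ h₃) (I.mul_mem_left _ h₄)) (I.mul_mem_left _ h₀)
  simp only [List.forall_mem_cons]
  exact ⟨h₅, h₃, h₄, by simp⟩

end Linkage

theorem gorenstein_resolution_general (k : Type*) [CommRing k] :
    letI R := MvPolynomial (Fin 6) k
    letI z : Fin 6 → R := X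
    letI gens : Fin 5 → R :=
      ![z 3 * z 4 - z 0 * z 5, z 1 * z 4 - z 3 * z 5, z 2 * z 3 - z 4 * z 5,
        z 0 * z 2 - z 4 ^ 2, z 0 * z 1 - z 3 ^ 2]
    letI IX : Ideal R := Ideal.span (Set.range gens)
    ∃ (M₂ : Matrix (Fin 5) (Fin 5) R) (m₁ : Fin 5 → R),
      (∀ i j, (M₂ i j).IsHomogeneous 1) ∧ (∀ i, (m₁ i).IsHomogeneous 2) ∧
      Function.Injective (fun r : R => r • m₁) ∧
      (∀ v : Fin 5 → R, M₂.mulVec v = 0 ↔ ∃ r : R, v = r • m₁) ∧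
      (∀ w : Fin 5 → R, (∑ i, w i * gens i) = 0 ↔ ∃ v : Fin 5 → R, w = M₂.mulVec v) ∧
      (∀ x : R, x ∈ IX ↔ ∃ w : Fin 5 → R, x = ∑ i, w i * gens i) := by
  rw [← subpfaffians_linkageMatrix k]
  obtain ⟨r, s, t, hreg, hmem⟩ := exists_isWeaklyRegular_mem_span_subpfaffians_linkageMatrix k
  obtain ⟨hinj, hker, hsyz⟩ := (isAlternating_linkageMatrix k).exact_subpfaffians hreg hmem
  refine ⟨linkageMatrix k, subpfaffians (linkageMatrix k), isHomogeneous_linkageMatrix k,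
    isHomogeneous_subpfaffians (isHomogeneous_linkageMatrix k), hinj, fun v => ?_, fun w => ?_,
    fun x => ?_⟩
  · simpa [eq_comm] using hker v
  · simpa [eq_comm, Fintype.linearCombination_apply] using hsyz w
  · simp only [Ideal.mem_span_range_iff_exists_fun, eq_comm]

/-- in `R = k[z₀,…,z₅]`, the ideal
`I_X = (z₃z₄−z₀z₅, z₁z₄−z₃z₅, z₂z₃−z₄z₅, z₀z₂−z₄², z₀z₁−z₃²)` defines a Gorenstein
quotient `R/I_X`; equivalently, `I_X` admits a graded free resolution
`0 → R(−5) → 5R(−3) → 5R(−2) → I_X → 0`, i.e. there is an exact sequence with a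
degree-`2` column `m₁` (the map `R(−5) → 5R(−3)`), a matrix `M₂` of linear forms
(the map `5R(−3) → 5R(−2)`), and the five quadratic generators surjecting onto
`I_X`. -/
theorem gorenstein_resolution (k : Type*) [Field k] :
    letI R := MvPolynomial (Fin 6) k
    letI z : Fin 6 → R := X
    letI gens : Fin 5 → R :=
      ![z 3 * z 4 - z 0 * z 5, z 1 * z 4 - z 3 * z 5, z 2 * z 3 - z 4 * z 5,
        z 0 * z 2 - z 4 ^ 2, z 0 * z 1 - z 3 ^ 2]
    letI IX : Ideal R := Ideal.span (Set.range gens)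
    ∃ (M₂ : Matrix (Fin 5) (Fin 5) R) (m₁ : Fin 5 → R),
      (∀ i j, (M₂ i j).IsHomogeneous 1) ∧ (∀ i, (m₁ i).IsHomogeneous 2) ∧
      Function.Injective (fun r : R => r • m₁) ∧
      (∀ v : Fin 5 → R, M₂.mulVec v = 0 ↔ ∃ r : R, v = r • m₁) ∧
      (∀ w : Fin 5 → R, (∑ i, w i * gens i) = 0 ↔ ∃ v : Fin 5 → R, w = M₂.mulVec v) ∧
      (∀ x : R, x ∈ IX ↔ ∃ w : Fin 5 → R, x = ∑ i, w i * gens i) :=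
  gorenstein_resolution_general k
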